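/- arXiv:2408.13114 — 5 statements merged into one kernel-verified Lean document; each statement's English description precedes it below -/
import Mathlib

section
/- Let f : ℝ → ℝ be a Lipschitz function and let a ≤ b be real numbers. Then the derivative of f satisfies a ≤ f'(x) ≤ b for Lebesgue-almost every x ∈ ℝ if and only if a·(y − x) ≤ f(y) − f(x) ≤ b·(y − x) for all real x < y. -/
/-!
A Lipschitz function on `ℝ` is absolutely continuous on every compact interval, so by the Lebesgue
fundamental theorem of calculus (`AbsolutelyContinuousOnInterval.integral_deriv_eq_sub`) its
increment over `[x, y]` is `∫ t in x..y, deriv f t`; integrating almost-everywhere bounds on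
`deriv f` bounds the increments. Conversely, by Rademacher's theorem
(`LipschitzWith.ae_differentiableAt`) the derivative is almost everywhere a genuine limit of
difference quotients, and the bounds on the quotients pass to the limit.
-/

open MeasureTheory

/-- A Lipschitz function `f : ℝ → ℝ` has derivative in `[a, b]` almost everywhere
iff all its difference quotients lie in `[a, b]`. -/
theorem lipschitz_deriv_bounds_iff_slope_bounds
    (f : ℝ → ℝ) (L : NNReal) (hf : LipschitzWith L f) (a b : ℝ) (hab : a ≤ b) :
    (∀ᵐ x : ℝ ∂volume, a ≤ deriv f x ∧ deriv f x ≤ b) ↔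
      (∀ x y : ℝ, x < y → a * (y - x) ≤ f y - f x ∧ f y - f x ≤ b * (y - x)) := by
  constructor
  · intro h x y hxy
    have hac : AbsolutelyContinuousOnInterval f x y :=
      hf.lipschitzOnWith.absolutelyContinuousOnInterval
    have hint := hac.intervalIntegrable_deriv
    have hlower := intervalIntegral.integral_mono_ae hxy.le
      (intervalIntegrable_const (c := a)) hint (h.mono fun _ ht => ht.1)
    have hupper := intervalIntegral.integral_mono_ae hxy.le hint
      (intervalIntegrable_const (c := b)) (h.mono fun _ ht => ht.2)
    rw [hac.integral_deriv_eq_sub, intervalIntegral.integral_const, smul_eq_mul, mul_comm]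
      at hlower hupper
    exact ⟨hlower, hupper⟩
  · intro h
    filter_upwards [hf.ae_differentiableAt] with x hx
    -- Right-sided difference quotients suffice, since `h` is stated for ordered pairs.
    have hlim : Filter.Tendsto (slope f x) (nhdsWithin x (Set.Ioi x)) (nhds (deriv f x)) :=
      (hasDerivAt_iff_tendsto_slope.1 hx.hasDerivAt).mono_left
        (nhdsWithin_mono _ fun y hy => ne_of_gt hy)
    constructor
    · refine ge_of_tendsto hlim ?_
      filter_upwards [self_mem_nhdsWithin] with y hy
      rw [slope_def_field, le_div_iff₀ (sub_pos.2 hy)]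
      exact (h x y hy).1
    · refine le_of_tendsto hlim ?_
      filter_upwards [self_mem_nhdsWithin] with y hy
      rw [slope_def_field, div_le_iff₀ (sub_pos.2 hy)]
      exact (h x y hy).2
end

section
/- Let f : ℝ → ℝ be strictly increasing and surjective, let s > 0, and assume f(y) − f(x) ≤ s·(y − x) for all x < y. Let g = f⁻¹ be the inverse function and define φ(y) = ∫₀^y (g(t) − t) dt. Then for every x ∈ ℝ, z = f(x) is the unique minimizer over ℝ of z ↦ (1/2)(x − z)² + φ(z); that is, f = prox_φ for this continuous piecewise-defined potential φ. -/
/-!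
The increment of the objective `w ↦ (1/2)(x − w)² + φ w` between `z = f x` and `w` is
`∫ t in z..w, (g t − x)`, because `(1/2)(x − w)² − (1/2)(x − z)² = ∫ t in z..w, (t − x)`.
The inverse `g` is strictly increasing with `g z = x`, so the integrand has the sign of `t − z`
and the increment is strictly positive for every `w ≠ z`. Monotonicity of `g` also gives the
interval integrability used to split and combine the integrals.
-/

theorem increment_eq_integral {g φ : ℝ → ℝ} (hg : Monotone g)
    (hφ : ∀ y : ℝ, φ y = ∫ t in (0 : ℝ)..y, (g t - t)) (x z w : ℝ) :
    ((1 / 2) * (x - w) ^ 2 + φ w) - ((1 / 2) * (x - z) ^ 2 + φ z)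
      = ∫ t in z..w, (g t - x) := by
  have hgi : ∀ a b : ℝ, IntervalIntegrable g MeasureTheory.volume a b :=
    fun a b => hg.intervalIntegrable
  have hid : ∀ a b : ℝ, IntervalIntegrable (fun t : ℝ => t) MeasureTheory.volume a b :=
    fun a b => continuous_id.intervalIntegrable a b
  have hsub : φ w - φ z = ∫ t in z..w, (g t - t) := by
    rw [hφ, hφ]
    exact intervalIntegral.integral_interval_sub_left
      ((hgi 0 w).sub (hid 0 w)) ((hgi 0 z).sub (hid 0 z))
  rw [intervalIntegral.integral_sub (hgi z w) (hid z w), integral_id] at hsub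
  rw [intervalIntegral.integral_sub (hgi z w) intervalIntegrable_const,
    intervalIntegral.integral_const, smul_eq_mul]
  linear_combination hsub

theorem integral_sub_pos_of_ne {g : ℝ → ℝ} (hg : StrictMono g) {z w : ℝ} (hne : w ≠ z) :
    0 < ∫ t in z..w, (g t - g z) := by
  have hi : ∀ a b : ℝ, IntervalIntegrable (fun t => g t - g z) MeasureTheory.volume a b :=
    fun a b => hg.monotone.intervalIntegrable.sub intervalIntegrable_const
  rcases lt_or_gt_of_ne hne with h | h
  · rw [intervalIntegral.integral_symm, ← intervalIntegral.integral_neg]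
    exact intervalIntegral.intervalIntegral_pos_of_pos_on (hi w z).neg
      (fun t ht => neg_pos.mpr (sub_neg.mpr (hg ht.2))) h
  · exact intervalIntegral.intervalIntegral_pos_of_pos_on (hi z w)
      (fun t ht => sub_pos.mpr (hg ht.1)) h


/-- A strictly increasing surjective map `f` with slopes bounded by `s > 0` is the
proximity operator of the potential `φ(y) = ∫₀^y (f⁻¹(t) − t) dt`. -/
theorem increasing_map_is_prox_of_potential
    (f : ℝ → ℝ) (hmono : StrictMono f) (hsurj : Function.Surjective f)
    (s : ℝ) (hs : 0 < s)
    (hslope : ∀ x y : ℝ, x < y → f y - f x ≤ s * (y - x))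
    (g : ℝ → ℝ) (hgl : Function.LeftInverse g f) (hgr : Function.RightInverse g f)
    (φ : ℝ → ℝ) (hφ : ∀ y : ℝ, φ y = ∫ t in (0 : ℝ)..y, (g t - t)) :
    ∀ x : ℝ,
      (∀ w : ℝ, (1 / 2) * (x - f x) ^ 2 + φ (f x) ≤ (1 / 2) * (x - w) ^ 2 + φ w) ∧
        ∀ z : ℝ,
          (∀ w : ℝ, (1 / 2) * (x - z) ^ 2 + φ z ≤ (1 / 2) * (x - w) ^ 2 + φ w) →
            z = f x := by
  intro x
  have hg : StrictMono g := fun a b hab => by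
    rw [← hmono.lt_iff_lt, hgr a, hgr b]
    exact hab
  have hlt : ∀ w : ℝ, w ≠ f x →
      (1 / 2) * (x - f x) ^ 2 + φ (f x) < (1 / 2) * (x - w) ^ 2 + φ w := by
    intro w hw
    have hpos := integral_sub_pos_of_ne hg hw
    rw [hgl x, ← increment_eq_integral hg.monotone hφ] at hpos
    exact sub_pos.mp hpos
  refine ⟨fun w => ?_, fun z hz => ?_⟩
  · rcases eq_or_ne w (f x) with rfl | hw
    · exact le_rfl
    · exact (hlt w hw).le
  · by_contra hne
    exact (hlt z hne).not_ge (hz (f x))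
end

section
/- Let f : ℝ → ℝ be strictly increasing and surjective, let s > 0 with f(y) − f(x) ≤ s·(y − x) for all x < y, let g = f⁻¹, and define φ(y) = ∫₀^y (g(t) − t) dt. Then the function y ↦ φ(y) − ((1/s − 1)/2)·y² is convex on ℝ. In particular: if s ≤ 1 (f firmly non-expansive) then φ is convex; if s < 1 then φ is (1/s − 1)-strongly convex; and if s ≥ 1 then φ is (1 − 1/s)-weakly convex, i.e., y ↦ φ(y) + ((1 − 1/s)/2)·y² is convex. -/
/-!
A strictly increasing inverse `g` of `f` is continuous, being monotone and onto, so `φ` is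
differentiable with `φ' t = g t - t`. The slope bound on `f` says that `t ↦ g t - t / s` is
monotone. Hence for every `c ≤ 1 / s - 1` the derivative `g t - t - c * t` of
`y ↦ φ y - (c / 2) * y ^ 2` is monotone, and that function is convex (`convexOn_sub_sq`).
The three claims are the cases `c = 1 / s - 1`, `c = 0` and again `c = 1 / s - 1`.
-/

/-- The primitive of `g t - t` is `c`-strongly convex (weakly, if `c < 0`) as soon as `g`
expands distances by a factor of at least `1 + c`. -/
theorem convexOn_sub_sq {g φ : ℝ → ℝ} (hg : Continuous g)
    (hφ : ∀ y : ℝ, φ y = ∫ t in (0 : ℝ)..y, (g t - t)) {c : ℝ}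
    (hexp : ∀ u v : ℝ, u ≤ v → (1 + c) * (v - u) ≤ g v - g u) :
    ConvexOn ℝ Set.univ (fun y : ℝ => φ y - (c / 2) * y ^ 2) := by
  have hd : ∀ y, HasDerivAt (fun y : ℝ => φ y - (c / 2) * y ^ 2) (g y - y - c * y) y := by
    intro y
    have h1 : HasDerivAt φ (g y - y) y := by
      rw [funext hφ]
      exact (hg.sub continuous_id).integral_hasStrictDerivAt 0 y |>.hasDerivAt
    have h2 := h1.sub ((hasDerivAt_pow 2 y).const_mul (c / 2))
    refine h2.congr_deriv ?_
    push_cast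
    ring
  refine Monotone.convexOn_univ_of_deriv (fun y => (hd y).differentiableAt) ?_
  intro u v huv
  rw [(hd u).deriv, (hd v).deriv]
  linarith [hexp u v huv]


/-- Convexity properties of the potential `φ(y) = ∫₀^y (f⁻¹(t) − t) dt` of a strictly
increasing surjective `f` with maximal slope `s`: `y ↦ φ(y) − ((1/s − 1)/2) y²` is
convex; in particular `φ` is convex if `s ≤ 1` and `(1 − 1/s)`-weakly convex if `s ≥ 1`. -/
theorem prox_potential_convexity
    (f : ℝ → ℝ) (hmono : StrictMono f) (hsurj : Function.Surjective f)
    (s : ℝ) (hs : 0 < s)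
    (hslope : ∀ x y : ℝ, x < y → f y - f x ≤ s * (y - x))
    (g : ℝ → ℝ) (hgl : Function.LeftInverse g f) (hgr : Function.RightInverse g f)
    (φ : ℝ → ℝ) (hφ : ∀ y : ℝ, φ y = ∫ t in (0 : ℝ)..y, (g t - t)) :
    ConvexOn ℝ Set.univ (fun y : ℝ => φ y - ((1 / s - 1) / 2) * y ^ 2) ∧
      (s ≤ 1 → ConvexOn ℝ Set.univ φ) ∧
      (1 ≤ s → ConvexOn ℝ Set.univ (fun y : ℝ => φ y + ((1 - 1 / s) / 2) * y ^ 2)) := by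
  have hg_mono : StrictMono g := fun u v huv =>
    hmono.lt_iff_lt.mp (by rwa [hgr u, hgr v])
  have hg : Continuous g := hg_mono.monotone.continuous_of_surjective hgl.surjective
  have hexp : ∀ u v : ℝ, u ≤ v → 1 / s * (v - u) ≤ g v - g u := by
    intro u v huv
    rcases huv.eq_or_lt with rfl | huv
    · simp
    have h := hslope _ _ (hg_mono huv)
    rw [hgr u, hgr v] at h
    rw [one_div, inv_mul_le_iff₀ hs]
    exact h
  have key : ConvexOn ℝ Set.univ (fun y : ℝ => φ y - ((1 / s - 1) / 2) * y ^ 2) :=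
    convexOn_sub_sq hg hφ (fun u v huv => by linarith [hexp u v huv])
  refine ⟨key, fun hs1 => ?_, fun _ => ?_⟩
  · have h1 : 1 ≤ 1 / s := by rwa [le_div_iff₀ hs, one_mul]
    have h0 := convexOn_sub_sq (c := 0) hg hφ (fun u v huv => by
      nlinarith [hexp u v huv])
    simpa using h0
  · convert key using 2 with y
    ring
end

section
/- Let φ : ℝ → ℝ be convex and λ > 0. Suppose p : ℝ → ℝ and q : ℝ → ℝ are such that for every x, p(x) minimizes z ↦ (1/2)(x − z)² + φ(z) and q(x) minimizes z ↦ (1/2)(x − z)² + λφ(z) over ℝ. Then for every x ∈ ℝ, q(λx + (1 − λ)p(x)) = p(x). (The graph of prox_{λφ} is obtained from the graph of prox_φ by the point transformation (x, y) ↦ (λx + (1 − λ)y, y).) -/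
/-!
A minimizer `y` of `z ↦ (1/2)(x - z)² + φ z` is characterized by `x - y ∈ ∂φ(y)`. Scaling this
subgradient inequality by `λ` gives `u - y ∈ ∂(λφ)(y)` for `u = λx + (1 - λ)y`, because
`u - y = λ(x - y)`. By strong convexity of the quadratic term, `y` is then the only minimizer of
`z ↦ (1/2)(u - z)² + λφ z`.
-/

/-- Fermat's rule for the proximal problem: if `y` minimizes `z ↦ (1/2)(x - z)² + φ z` with `φ`
convex, then `x - y` is a subgradient of `φ` at `y`. -/
lemma subgradient_of_prox (φ : ℝ → ℝ) (hφ : ConvexOn ℝ Set.univ φ) (x y : ℝ)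
    (hy : ∀ w : ℝ, (1 / 2) * (x - y) ^ 2 + φ y ≤ (1 / 2) * (x - w) ^ 2 + φ w) (w : ℝ) :
    φ y + (x - y) * (w - y) ≤ φ w := by
  -- Comparing `y` with points of the segment `[y, w]` gives the inequality up to an `O(t)` error.
  have key : ∀ t : ℝ, 0 < t → t ≤ 1 →
      (x - y) * (w - y) - (φ w - φ y) ≤ t * (w - y) ^ 2 / 2 := by
    intro t ht ht1
    have h1 := hy ((1 - t) * y + t * w)
    have h2 := hφ.2 (Set.mem_univ y) (Set.mem_univ w) (sub_nonneg.2 ht1) ht.le (by ring)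
    simp only [smul_eq_mul] at h2
    have h3 : t * ((x - y) * (w - y) - (φ w - φ y)) ≤ t * (t * (w - y) ^ 2 / 2) := by
      nlinarith
    exact le_of_mul_le_mul_left h3 ht
  by_contra! hlt
  set D := (x - y) * (w - y) - (φ w - φ y) with hD
  have hDpos : 0 < D := by linarith
  have hs : 0 ≤ (w - y) ^ 2 := sq_nonneg _
  have hsum : 0 < D + (w - y) ^ 2 := by linarith
  -- This step lies in `(0, 1]` and makes the error term smaller than `D`.
  have h := key (D / (D + (w - y) ^ 2)) (by positivity) ((div_le_one hsum).2 (by linarith))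
  have h4 : D / (D + (w - y) ^ 2) * (D + (w - y) ^ 2) = D := div_mul_cancel₀ _ hsum.ne'
  have h5 : 0 < D / (D + (w - y) ^ 2) := by positivity
  nlinarith [mul_pos h5 hDpos]

/-- The graph of `prox_{λφ}` is obtained from the graph of `prox_φ` by the point
transformation `(x, y) ↦ (λx + (1 − λ)y, y)`. -/
theorem prox_reweighted_potential
    (φ : ℝ → ℝ) (hφ : ConvexOn ℝ Set.univ φ) (lam : ℝ) (hlam : 0 < lam)
    (p q : ℝ → ℝ)
    (hp : ∀ x : ℝ, ∀ w : ℝ,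
      (1 / 2) * (x - p x) ^ 2 + φ (p x) ≤ (1 / 2) * (x - w) ^ 2 + φ w)
    (hq : ∀ x : ℝ, ∀ w : ℝ,
      (1 / 2) * (x - q x) ^ 2 + lam * φ (q x) ≤ (1 / 2) * (x - w) ^ 2 + lam * φ w) :
    ∀ x : ℝ, q (lam * x + (1 - lam) * p x) = p x := by
  intro x
  have h1 := hq (lam * x + (1 - lam) * p x) (p x)
  generalize q (lam * x + (1 - lam) * p x) = r at h1 ⊢
  have h2 := mul_le_mul_of_nonneg_left (subgradient_of_prox φ hφ x (p x) (hp x) r) hlam.le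
  have h3 : (r - p x) ^ 2 ≤ 0 := by nlinarith
  exact sub_eq_zero.1 (pow_eq_zero_iff two_ne_zero |>.1 (le_antisymm h3 (sq_nonneg _)))
end

section
/- Let N ≥ 3, let x₁ < x₂ < ⋯ < x_N be real numbers and z₁, …, z_N ∈ ℝ, and define the geometric slopes s_n = (z_n − z_{n−1})/(x_n − x_{n−1}) for n = 2, …, N. If f : ℝ → ℝ is differentiable at every point and interpolates the data, f(x_n) = z_n for n = 1, …, N, then Σ_{n=3}^{N} |s_n − s_{n−1}| ≤ V, where V is the total variation of the derivative f' over ℝ. (No interpolator has second-order total variation smaller than TV⁽²⁾(ℙ) = Σ_n |s_n − s_{n−1}| of the canonical piecewise-linear interpolant.) -/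
/-! By the mean value theorem each geometric slope is a value `deriv f (c n)` at some point
`c n` strictly between consecutive abscissae. These points are increasing, so the sum of absolute
differences of consecutive slopes is one of the sums whose supremum defines the total variation
of `deriv f`. -/


/-- Any differentiable interpolator of data points `(x_n, z_n)` has second-order total
variation (total variation of its derivative) at least the sum of absolute differences
of consecutive geometric slopes of the data (indices `0`-based: points `x 0 < ⋯ < x (N-1)`,
slopes `s n = (z n − z (n−1))/(x n − x (n−1))` for `1 ≤ n ≤ N−1`, summed over
`2 ≤ n ≤ N−1`). -/
theorem interpolator_variation_lower_bound
    (N : ℕ) (hN : 3 ≤ N) (x z : ℕ → ℝ)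
    (hx : ∀ m n : ℕ, m < n → n < N → x m < x n)
    (f : ℝ → ℝ) (hf : Differentiable ℝ f)
    (hint : ∀ n : ℕ, n < N → f (x n) = z n) :
    ENNReal.ofReal (∑ n ∈ Finset.Ico 2 N,
        |(z n - z (n - 1)) / (x n - x (n - 1)) -
          (z (n - 1) - z (n - 2)) / (x (n - 1) - x (n - 2))|) ≤
      eVariationOn (deriv f) Set.univ := by
  have mvt : ∀ n : ℕ, ∃ c : ℝ, n + 1 < N → (x n < c ∧ c < x (n + 1)) ∧
      deriv f c = (z (n + 1) - z n) / (x (n + 1) - x n) := by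
    intro n
    by_cases hn : n + 1 < N
    · obtain ⟨c, hc, hd⟩ := exists_deriv_eq_slope f (hx n (n + 1) n.lt_succ_self hn)
        hf.continuous.continuousOn hf.differentiableOn
      refine ⟨c, fun _ => ⟨hc, ?_⟩⟩
      rw [hd, hint _ hn, hint n (by omega)]
    · exact ⟨0, fun h => absurd h hn⟩
  choose c hc using mvt
  have hmono : MonotoneOn c (Set.Icc 0 (N - 2)) := by
    intro a ha b hb hab
    rcases hab.eq_or_lt with rfl | hlt
    · exact le_rfl
    have hbN : b + 1 < N := by have := hb.2; omega
    have hle : x (a + 1) ≤ x b := by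
      rcases (Nat.succ_le_of_lt hlt).eq_or_lt with h | h
      · exact (congrArg x h).le
      · exact (hx _ _ h (by omega)).le
    exact ((hc a (by omega)).1.2.le.trans hle).trans (hc b hbN).1.1.le
  refine le_of_eq_of_le ?_
    (eVariationOn.sum_le_of_monotoneOn_Icc (f := deriv f) hmono fun i _ => Set.mem_univ (c i))
  rw [ENNReal.ofReal_sum_of_nonneg fun _ _ => abs_nonneg _, Finset.sum_Ico_eq_sum_range,
    ← Finset.range_eq_Ico]
  refine Finset.sum_congr rfl fun i hi => ?_
  have hiN : i + 1 + 1 < N := by have := Finset.mem_range.mp hi; omega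
  rw [edist_dist, Real.dist_eq, (hc (i + 1) hiN).2, (hc i (by omega)).2,
    show 2 + i = i + 1 + 1 by omega, show i + 1 + 1 - 1 = i + 1 by omega,
    show i + 1 + 1 - 2 = i by omega]
end
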